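/- Let p be an odd prime and W an infinite p-free Coxeter group with |S| = n all of whose proper standard parabolic subgroups are finite. Then H^k(A_W, F_p) = 0 for 0 < k < min{p-2, n-1}. -/

import Mathlib

/-- The sign homomorphism of a Coxeter system, sending every simple reflection to `-1`. -/
noncomputable def CoxeterSystem.signHom {B W : Type*} [Group W] {M : CoxeterMatrix B}
    (cs : CoxeterSystem M W) : W →* ℤˣ :=
  cs.lift ⟨fun _ => -1, fun i i' => by simp⟩

/-- The standard parabolic subgroup `W_T` generated by the simple reflections in `T ⊆ S`. -/
def CoxeterSystem.parabolic {B W : Type*} [Group W] {M : CoxeterMatrix B}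
    (cs : CoxeterSystem M W) (T : Set B) : Subgroup W :=
  Subgroup.closure (cs.simple '' T)

/-- A Coxeter matrix is `p`-free if every entry `m(s,t)` is prime to `p`.  (In Mathlib's
convention the entry `0` stands for `∞`, which counts as prime to every prime.) -/
def CoxeterMatrix.IsPFree {B : Type*} (M : CoxeterMatrix B) (p : ℕ) : Prop :=
  ∀ i i' : B, p ∣ M i i' → M i i' = 0

/-!
Over a commutative ring `k`, let `V_T` be the left ideal of `k[W]` on which `W_T` acts from the
right through the sign character. If `D(w)` is the right descent set of `w`, the vectors
`w ∑_{v ∈ W_{D(w)}} sgn(v) v` form a `k`-basis of `k[W]`, and those with `T ⊆ D(w)` form a basis of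
`V_T`. Since one basis serves all the `V_T` at once, `V_{T ∪ s}` meets `∑_{j ∈ J} V_{T ∪ j}` in
`∑_{j ∈ J} V_{T ∪ s ∪ j}`, so that the layers `N(T, J) = V_T / ∑_{j ∈ J} V_{T ∪ j}` sit in exact
sequences `0 → N(T ∪ s, J) → N(T, J) → N(T, J ∪ s) → 0`.

When `2` is a unit of `k`, the layer `N(∅, S)` is the trivial module. When moreover `|W_T|` is a
unit for all `|T| ≤ d`, these `V_T` are direct summands of `k[W]`, and dimension shifting gives
`Ext^n(k, Y) = 0` for `0 < n < d` whenever `A_W` acts trivially on `Y`. Shapiro's lemma, with `Y`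
coinduced from `A_W`, finishes.

That `p` does not divide `|W_T|` for `|T| < p - 1` comes from the geometric representation. It is
defined over a real subfield of `ℚ(ζ_N)` with `N` prime to `p`, over which `Φ_p` is irreducible of
degree `p - 1 > |T|`. An element of order `p` in `W_T` would therefore fix every simple root in `T`,
whereas it sends the one at a right descent to a negative root.
-/

namespace CoxeterAlternating

section DihedralTrigonometry

open Polynomial Polynomial.Chebyshev Real

theorem S_eval_double {R : Type*} [CommRing R] (x : R) (n : ℕ) :
    (S R (2 * n)).eval x = (S R n).eval (x * x - 2) + (S R (n - 1)).eval (x * x - 2) ∧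
      (S R (2 * n + 1)).eval x = x * (S R n).eval (x * x - 2) := by
  induction n with
  | zero => simp
  | succ n ih =>
    obtain ⟨heven, hodd⟩ := ih
    have hS : (S R (n + 1)).eval (x * x - 2) =
        (x * x - 2) * (S R n).eval (x * x - 2) - (S R (n - 1)).eval (x * x - 2) := by
      simp [S_add_one]
    have heven' : (S R (2 * (n + 1))).eval x =
        (S R (n + 1)).eval (x * x - 2) + (S R n).eval (x * x - 2) := by
      rw [mul_add, mul_one, S_add_two, eval_sub, eval_mul, eval_X, hodd, heven, hS]
      ring
    have hodd' : (S R (2 * (n + 1) + 1)).eval x = x * (S R (n + 1)).eval (x * x - 2) := by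
      rw [S_add_one, eval_sub, eval_mul, eval_X, heven',
        show (2 * (n + 1) - 1 : ℤ) = 2 * n + 1 by ring, hodd]
      ring
    push_cast
    exact ⟨by rwa [add_sub_cancel_right], hodd'⟩

theorem sin_pi_div_pos {m : ℕ} (hm : 2 ≤ m) : 0 < sin (π / m) := by
  have hm' : (2 : ℝ) ≤ m := by exact_mod_cast hm
  exact sin_pos_of_pos_of_lt_pi (by positivity) (div_lt_self pi_pos (by linarith))

theorem cos_pi_div_pos {m : ℕ} (hm : 3 ≤ m) : 0 < cos (π / m) := by
  have hm' : (3 : ℝ) ≤ m := by exact_mod_cast hm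
  refine cos_pos_of_mem_Ioo ⟨by linarith [pi_pos, show 0 < π / m by positivity], ?_⟩
  exact div_lt_div_of_pos_left pi_pos two_pos (by linarith)

theorem S_eval_two_mul_cos_pi_div_nonneg {m k : ℕ} (hm : m ≠ 1) (hk : m = 0 ∨ k < m) :
    0 ≤ (S ℝ k).eval (2 * cos (π / m)) := by
  obtain rfl | hm0 := eq_or_ne m 0
  · simp only [Nat.cast_zero, div_zero, cos_zero, mul_one, S_eval_two]
    positivity
  have hkm : (k + 1 : ℝ) ≤ m := by exact_mod_cast hk.resolve_left hm0
  have hsin : 0 < sin (π / m) := sin_pi_div_pos (by lia)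
  refine le_of_mul_le_mul_right ?_ hsin
  rw [zero_mul, S_two_mul_real_cos]
  refine sin_nonneg_of_nonneg_of_le_pi (by push_cast; positivity) ?_
  rw [← mul_div_assoc, div_le_iff₀ (by positivity), mul_comm π]
  exact mul_le_mul_of_nonneg_right (by exact_mod_cast hkm) pi_pos.le

theorem S_eval_two_mul_cos_pi_div_eq_zero {m : ℕ} (hm : 2 ≤ m) :
    (S ℝ (m - 1)).eval (2 * cos (π / m)) = 0 := by
  have hsin : 0 < sin (π / m) := sin_pi_div_pos hm
  have h := S_two_mul_real_cos (π / m) (m - 1)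
  have hangle : (((m - 1 : ℤ) : ℝ) + 1) * (π / m) = π := by
    have : (m : ℝ) ≠ 0 := by positivity
    push_cast
    field_simp
    ring
  rw [hangle, sin_pi] at h
  exact (mul_eq_zero.mp h).resolve_right hsin.ne'

end DihedralTrigonometry

section GeometricRepresentation

open Polynomial Polynomial.Chebyshev Real CoxeterSystem

variable {B W : Type*} [Group W] (M : CoxeterMatrix B)

/-- The simple root `α_i`, a basis vector of the geometric representation `B →₀ ℝ`. -/
noncomputable def simpleRoot (i : B) : B →₀ ℝ := Finsupp.single i 1

/-- The simple coroot `α_i^∨`, the functional with `⟨α_i^∨, α_j⟩ = -2 cos (π / m(i,j))`. The entry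
`0`, which encodes `m(i,j) = ∞`, gives `-2` as it should, because `π / 0 = 0`. -/
noncomputable def simpleCoroot (i : B) : Module.Dual ℝ (B →₀ ℝ) :=
  Finsupp.linearCombination ℝ fun j => -(2 * cos (π / M i j))

/-- The Tits form `(α_i, α_j) = -2 cos (π / m(i,j))`, normalised so that `(α_i, α_i) = 2`. -/
noncomputable def titsForm : (B →₀ ℝ) →ₗ[ℝ] Module.Dual ℝ (B →₀ ℝ) :=
  Finsupp.linearCombination ℝ (simpleCoroot M)

@[simp]
theorem simpleCoroot_simpleRoot (i j : B) :
    simpleCoroot M i (simpleRoot j) = -(2 * cos (π / M i j)) := by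
  simp [simpleCoroot, simpleRoot]

theorem simpleCoroot_simpleRoot_self (i : B) : simpleCoroot M i (simpleRoot i) = 2 := by
  simp

@[simp]
theorem titsForm_simpleRoot (i : B) : titsForm M (simpleRoot i) = simpleCoroot M i := by
  simp [titsForm, simpleRoot]

theorem titsForm_comm (v w : B →₀ ℝ) : titsForm M v w = titsForm M w v := by
  suffices titsForm M = (titsForm M).flip from LinearMap.congr_fun₂ this v w
  ext i j
  simp [titsForm, simpleCoroot, M.symmetric i j]

theorem simpleRoot_nonneg (i : B) : 0 ≤ simpleRoot i :=
  Finsupp.single_nonneg.mpr zero_le_one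

theorem simpleRoot_ne_zero (i : B) : simpleRoot i ≠ 0 :=
  Finsupp.single_ne_zero.mpr one_ne_zero

/-- The reflection `v ↦ v - ⟨α_i^∨, v⟩ α_i` in the simple root `α_i`. -/
noncomputable def rootReflection (i : B) : (B →₀ ℝ) ≃ₗ[ℝ] (B →₀ ℝ) :=
  Module.reflection (simpleCoroot_simpleRoot_self M i)

theorem rootReflection_apply (i : B) (v : B →₀ ℝ) :
    rootReflection M i v = v - simpleCoroot M i v • simpleRoot i :=
  Module.reflection_apply ..

theorem rootReflection_simpleRoot (i : B) :
    rootReflection M i (simpleRoot i) = -simpleRoot i :=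
  Module.reflection_apply_self _

theorem rootReflection_rootReflection (i : B) (v : B →₀ ℝ) :
    rootReflection M i (rootReflection M i v) = v :=
  Module.involutive_reflection (simpleCoroot_simpleRoot_self M i) v

theorem titsForm_rootReflection (i : B) (v w : B →₀ ℝ) :
    titsForm M (rootReflection M i v) (rootReflection M i w) = titsForm M v w := by
  simp only [rootReflection_apply, map_sub, map_smul, LinearMap.sub_apply, LinearMap.smul_apply,
    smul_eq_mul, titsForm_simpleRoot, titsForm_comm M v (simpleRoot i),
    simpleCoroot_simpleRoot_self]
  ring

theorem simpleCoroot_mul_simpleCoroot (i j : B) :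
    simpleCoroot M i (simpleRoot j) * simpleCoroot M j (simpleRoot i) - 2 =
      2 * cos (π / M i j) * (2 * cos (π / M i j)) - 2 := by
  rw [simpleCoroot_simpleRoot, simpleCoroot_simpleRoot, M.symmetric j i, neg_mul_neg]

theorem rootReflection_mul_sq_of_orthogonal {i j : B}
    (hij : simpleCoroot M i (simpleRoot j) = 0) :
    (rootReflection M i * rootReflection M j) ^ 2 = 1 := by
  have hji : simpleCoroot M j (simpleRoot i) = 0 := by
    rwa [simpleCoroot_simpleRoot, M.symmetric, ← simpleCoroot_simpleRoot]
  ext1 v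
  simp only [pow_two, LinearEquiv.mul_apply, rootReflection_apply, map_sub, map_smul, hij, hji,
    simpleCoroot_simpleRoot_self, LinearEquiv.coe_one, id_eq]
  module

theorem rootReflection_mul_pow_of_three_le {i j : B} (hm : 3 ≤ M i j) :
    (rootReflection M i * rootReflection M j) ^ M i j = 1 := by
  have hroot := S_eval_two_mul_cos_pi_div_eq_zero (m := M i j) (by lia)
  have hcos : 2 * cos (π / M i j) ≠ 0 := (mul_pos two_pos (cos_pi_div_pos hm)).ne'
  apply LinearEquiv.toLinearMap_injective
  rw [rootReflection, rootReflection, Module.reflection_mul_reflection_pow _ _ _ _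
    (simpleCoroot_mul_simpleCoroot M i j).symm]
  obtain ⟨q, hq | hq⟩ := Nat.even_or_odd' (M i j)
  · obtain ⟨r, rfl⟩ : ∃ r, q = r + 1 := ⟨q - 1, by lia⟩
    rw [show (M i j - 1 : ℤ) = 2 * r + 1 by lia, (S_eval_double _ r).2] at hroot
    rw [show (M i j - 2 : ℤ) / 2 = r by lia, show (M i j - 1 : ℤ) / 2 = r by lia,
      (mul_eq_zero.mp hroot).resolve_left hcos]
    simp
  · rw [show (M i j - 1 : ℤ) = 2 * q by lia, (S_eval_double _ q).1] at hroot
    rw [show (M i j - 2 : ℤ) / 2 = q - 1 by lia, show (M i j - 1 : ℤ) / 2 = q by lia,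
      show (M i j - 3 : ℤ) / 2 = q - 1 by lia, show (M i j : ℤ) / 2 = q by lia, hroot]
    simp

theorem rootReflection_mul_pow (i j : B) :
    (rootReflection M i * rootReflection M j) ^ M i j = 1 := by
  obtain rfl | hij := eq_or_ne i j
  · ext1 v
    simpa using rootReflection_rootReflection M i v
  have hm1 : M i j ≠ 1 := M.off_diagonal i j hij
  obtain h0 | h2 | h3 : M i j = 0 ∨ M i j = 2 ∨ 3 ≤ M i j := by lia
  · rw [h0, pow_zero]
  · rw [h2]
    exact rootReflection_mul_sq_of_orthogonal M (by simp [h2])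
  · exact rootReflection_mul_pow_of_three_le M h3

variable {M} (cs : CoxeterSystem M W)

/-- The geometric (Tits) representation of a Coxeter group on the real span of its simple roots. -/
noncomputable def geomRep : W →* ((B →₀ ℝ) ≃ₗ[ℝ] (B →₀ ℝ)) :=
  cs.lift ⟨rootReflection M, rootReflection_mul_pow M⟩

@[simp]
theorem geomRep_simple (i : B) : geomRep cs (cs.simple i) = rootReflection M i :=
  cs.lift_apply_simple _ i

theorem geomRep_simple_apply (i : B) (v : B →₀ ℝ) :
    geomRep cs (cs.simple i) v = v - simpleCoroot M i v • simpleRoot i := by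
  rw [geomRep_simple, rootReflection_apply]

theorem geomRep_mul_apply (g h : W) (v : B →₀ ℝ) :
    geomRep cs (g * h) v = geomRep cs g (geomRep cs h v) := by
  rw [map_mul, LinearEquiv.mul_apply]

theorem titsForm_geomRep (g : W) (v w : B →₀ ℝ) :
    titsForm M (geomRep cs g v) (geomRep cs g w) = titsForm M v w := by
  induction g using cs.simple_induction_left with
  | one => simp
  | mul_simple_left g i ih =>
    rw [geomRep_mul_apply, geomRep_mul_apply, geomRep_simple, titsForm_rootReflection, ih]

theorem exists_nonneg_geomRep_alternatingWord {i j : B} (hij : i ≠ j) (k : ℕ)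
    (hk : M i j = 0 ∨ k < M i j) :
    ∃ a b : ℝ, 0 ≤ a ∧ 0 ≤ b ∧ geomRep cs (cs.wordProd (alternatingWord i j k)) (simpleRoot i) =
      a • simpleRoot i + b • simpleRoot j := by
  have hS (l : ℕ) (hl : l ≤ k) : 0 ≤ (S ℝ l).eval (2 * cos (π / M i j)) :=
    S_eval_two_mul_cos_pi_div_nonneg (M.off_diagonal i j hij) (hk.imp_right hl.trans_lt)
  have hτ := (simpleCoroot_mul_simpleCoroot M i j).symm
  have hx : -simpleCoroot M j (simpleRoot i) = 2 * cos (π / M i j) := by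
    rw [simpleCoroot_simpleRoot, neg_neg, M.symmetric]
  have hfi := simpleCoroot_simpleRoot_self M i
  have hfj := simpleCoroot_simpleRoot_self M j
  rw [cs.prod_alternatingWord_eq_mul_pow]
  obtain ⟨q, rfl | rfl⟩ := Nat.even_or_odd' k
  · simp only [even_two, Even.mul_right, if_true, one_mul, Nat.mul_div_cancel_left q two_pos,
      map_pow, map_mul, geomRep_simple]
    refine ⟨_, _, ?_, ?_, Module.reflection_mul_reflection_pow_apply_self hfi hfj q _ hτ⟩
    · rw [← (S_eval_double _ q).1]
      exact_mod_cast hS (2 * q) le_rfl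
    · obtain _ | r := q
      · simp
      · rw [hx, mul_comm, show ((r + 1 : ℕ) - 1 : ℤ) = r by simp, ← (S_eval_double _ r).2]
        exact_mod_cast hS (2 * r + 1) (by lia)
  · simp only [Nat.not_even_bit1, if_false, show (2 * q + 1) / 2 = q by lia, map_pow, map_mul,
      geomRep_simple]
    refine ⟨_, _, ?_, ?_,
      Module.reflection_mul_reflection_mul_reflection_pow_apply_self hfi hfj q _ hτ⟩
    · rw [← (S_eval_double _ q).1]
      exact_mod_cast hS (2 * q) (by lia)
    · rw [hx, mul_comm, ← (S_eval_double _ q).2]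
      exact_mod_cast hS (2 * q + 1) le_rfl

end GeometricRepresentation

section RootsAndExchange

open CoxeterSystem

variable {B W : Type*} [Group W] {M : CoxeterMatrix B} (cs : CoxeterSystem M W)

theorem lt_of_eq_mul_alternatingWord {w v : W} {s t : B} {k : ℕ}
    (hw : w = v * cs.wordProd (alternatingWord s t k)) (hl : cs.length v + k = cs.length w)
    (hs : ¬ cs.IsRightDescent w s) : M s t = 0 ∨ k < M s t := by
  by_contra! ⟨h0, hk⟩
  have hred : cs.IsReduced (alternatingWord s t k) := by
    have hmul := cs.length_mul_le v (cs.wordProd (alternatingWord s t k))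
    have hword := cs.length_wordProd_le (alternatingWord s t k)
    rw [← hw] at hmul
    rw [length_alternatingWord] at hword
    rw [CoxeterSystem.IsReduced, length_alternatingWord]
    lia
  obtain rfl : k = M s t :=
    le_antisymm (not_lt.mp fun hlt => cs.not_isReduced_alternatingWord s t h0 hlt hred) hk
  obtain ⟨m, hm⟩ := Nat.exists_eq_succ_of_ne_zero h0
  have hbraid : cs.wordProd (alternatingWord s t (M s t)) =
      cs.wordProd (alternatingWord s t m) * cs.simple s := by
    have h := cs.wordProd_braidWord_eq s t
    rw [braidWord, braidWord, M.symmetric t s] at h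
    rw [h, hm, Nat.succ_eq_add_one, alternatingWord_succ, wordProd_concat]
  refine hs (cs.isRightDescent_iff.mpr ?_)
  have hws : w * cs.simple s = v * cs.wordProd (alternatingWord s t m) := by
    rw [hw, hbraid, mul_assoc, simple_mul_simple_cancel_right]
  have hmul := cs.length_mul_le v (cs.wordProd (alternatingWord s t m))
  have hword := cs.length_wordProd_le (alternatingWord s t m)
  rw [length_alternatingWord] at hword
  obtain h | h := cs.length_mul_simple w s <;> rw [hws] at h ⊢ <;> lia

theorem exists_eq_mul_alternatingWord {w : W} {s t : B} (hs : ¬ cs.IsRightDescent w s)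
    (ht : cs.IsRightDescent w t) :
    ∃ v k, w = v * cs.wordProd (alternatingWord s t k) ∧ (M s t = 0 ∨ k < M s t) ∧
      cs.length v < cs.length w ∧ ¬ cs.IsRightDescent v s ∧ ¬ cs.IsRightDescent v t := by
  obtain ⟨v, ⟨k, hw, hl⟩, hmin⟩ := (measure cs.length).wf.has_min
    {v | ∃ k, w = v * cs.wordProd (alternatingWord s t k) ∧ cs.length v + k = cs.length w}
    ⟨w, 0, by simp [alternatingWord], rfl⟩
  replace hmin : ∀ v' k', w = v' * cs.wordProd (alternatingWord s t k') →
      cs.length v' + k' = cs.length w → cs.length v ≤ cs.length v' :=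
    fun v' k' hw' hl' => not_lt.mp (hmin v' ⟨k', hw', hl'⟩)
  have hvw : cs.length v < cs.length w := by
    have h := hmin (w * cs.simple t) 1 (by simp [alternatingWord]) (cs.isRightDescent_iff.mp ht)
    have := cs.isRightDescent_iff.mp ht
    lia
  have hnext : ¬ cs.IsRightDescent v (if Even k then t else s) := by
    intro h
    have hlen := cs.isRightDescent_iff.mp h
    have := hmin (v * cs.simple (if Even k then t else s)) (k + 1)
      (by rw [hw, alternatingWord_succ', wordProd_cons]; simp [mul_assoc]) (by lia)
    lia
  have hfirst : ¬ cs.IsRightDescent v (if Even k then s else t) := by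
    intro h
    obtain ⟨m, rfl⟩ : ∃ m, k = m + 1 := ⟨k - 1, by lia⟩
    have hletter : (if Even (m + 1) then s else t) = if Even m then t else s := by
      by_cases hm : Even m <;> simp [hm, Nat.even_add_one]
    rw [hletter] at h
    have hlen := cs.isRightDescent_iff.mp h
    rw [alternatingWord_succ', wordProd_cons, ← mul_assoc] at hw
    have hmul := cs.length_mul_le (v * cs.simple (if Even m then t else s))
      (cs.wordProd (alternatingWord s t m))
    have hword := cs.length_wordProd_le (alternatingWord s t m)
    rw [length_alternatingWord] at hword
    rw [← hw] at hmul
    lia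
  refine ⟨v, k, hw, lt_of_eq_mul_alternatingWord cs hw hl hs, hvw, ?_⟩
  split_ifs at hnext hfirst
  exacts [⟨hfirst, hnext⟩, ⟨hnext, hfirst⟩]

theorem geomRep_simpleRoot_nonneg {w : W} {i : B} (h : ¬ cs.IsRightDescent w i) :
    0 ≤ geomRep cs w (simpleRoot i) := by
  induction hn : cs.length w using Nat.strong_induction_on generalizing w i with
  | _ n ih =>
    obtain rfl | hw := eq_or_ne w 1
    · simpa using simpleRoot_nonneg i
    obtain ⟨t, ht⟩ := cs.exists_rightDescent_of_ne_one hw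
    have hit : i ≠ t := by rintro rfl; exact h ht
    obtain ⟨v, k, rfl, hk, hlt, hvi, hvt⟩ := exists_eq_mul_alternatingWord cs h ht
    obtain ⟨a, b, ha, hb, hab⟩ := exists_nonneg_geomRep_alternatingWord cs hit k hk
    rw [geomRep_mul_apply, hab, map_add, map_smul, map_smul]
    exact add_nonneg (smul_nonneg ha (ih _ (hn ▸ hlt) hvi rfl))
      (smul_nonneg hb (ih _ (hn ▸ hlt) hvt rfl))

theorem geomRep_simpleRoot_nonpos {w : W} {i : B} (h : cs.IsRightDescent w i) :
    geomRep cs w (simpleRoot i) ≤ 0 := by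
  have hpos := geomRep_simpleRoot_nonneg cs (cs.isRightDescent_iff_not_isRightDescent_mul.mp h)
  rwa [geomRep_mul_apply, geomRep_simple, rootReflection_simpleRoot, map_neg,
    Left.nonneg_neg_iff] at hpos

theorem geomRep_simpleRoot_ne {w : W} {i : B} (h : cs.IsRightDescent w i) :
    geomRep cs w (simpleRoot i) ≠ simpleRoot i := fun heq =>
  simpleRoot_ne_zero i (le_antisymm (heq ▸ geomRep_simpleRoot_nonpos cs h) (simpleRoot_nonneg i))

theorem geomRep_injective : Function.Injective (geomRep cs) := by
  refine (injective_iff_map_eq_one _).mpr fun w hw => ?_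
  by_contra hne
  obtain ⟨t, ht⟩ := cs.exists_rightDescent_of_ne_one hne
  exact geomRep_simpleRoot_ne cs ht (by simp [hw])

theorem geomRep_simpleRoot_eq {u : W} {i s : B} (hu : ¬ cs.IsRightDescent u s)
    (hiu : cs.IsRightDescent (cs.simple i * u) s) :
    geomRep cs u (simpleRoot s) = simpleRoot i := by
  set β := geomRep cs u (simpleRoot s) with hβ
  have hpos : 0 ≤ β := geomRep_simpleRoot_nonneg cs hu
  have hneg := geomRep_simpleRoot_nonpos cs hiu
  rw [geomRep_mul_apply, ← hβ, geomRep_simple_apply] at hneg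
  -- `β` and `s_i β` have opposite signs but differ only in the `i`-th coordinate.
  have hmul : β = β i • simpleRoot i := by
    ext j
    obtain rfl | hj := eq_or_ne i j
    · simp [simpleRoot]
    · have := hneg j
      simp only [simpleRoot, Finsupp.sub_apply, Finsupp.smul_apply, Finsupp.single_eq_of_ne' hj,
        smul_zero, sub_zero, Finsupp.zero_apply] at this ⊢
      exact le_antisymm this (hpos j)
  have hnorm : β i * β i = 1 := by
    have h := titsForm_geomRep cs u (simpleRoot s) (simpleRoot s)
    rw [← hβ, hmul, map_smul, map_smul, LinearMap.smul_apply, titsForm_simpleRoot,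
      titsForm_simpleRoot, simpleCoroot_simpleRoot_self, simpleCoroot_simpleRoot_self,
      smul_eq_mul, smul_eq_mul] at h
    linarith
  rw [hmul, (mul_self_eq_one_iff.mp hnorm).resolve_right fun h => by
    linarith [show 0 ≤ β i from hpos i], one_smul]

theorem simple_mul_eq_mul_simple {u : W} {i s : B}
    (h : geomRep cs u (simpleRoot s) = simpleRoot i) : cs.simple i * u = u * cs.simple s := by
  apply geomRep_injective cs
  ext1 v
  have hcoroot : simpleCoroot M i (geomRep cs u v) = simpleCoroot M s v := by
    rw [← titsForm_simpleRoot, ← titsForm_simpleRoot, ← h, titsForm_geomRep]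
  rw [geomRep_mul_apply, geomRep_mul_apply, geomRep_simple_apply, geomRep_simple_apply, hcoroot,
    map_sub, map_smul, h]

theorem exchange {ω : List B} {s : B} (h : cs.IsRightDescent (cs.wordProd ω) s) :
    ∃ j < ω.length, cs.wordProd ω * cs.simple s = cs.wordProd (ω.eraseIdx j) := by
  induction ω with
  | nil => exact absurd h (by simpa using cs.not_isRightDescent_one s)
  | cons i ω ih =>
    by_cases h' : cs.IsRightDescent (cs.wordProd ω) s
    · obtain ⟨j, hj, hωj⟩ := ih h'
      exact ⟨j + 1, by simpa using hj, by simp [wordProd_cons, mul_assoc, hωj]⟩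
    · rw [wordProd_cons] at h ⊢
      refine ⟨0, by simp, ?_⟩
      rw [simple_mul_eq_mul_simple cs (geomRep_simpleRoot_eq cs h' h),
        simple_mul_simple_cancel_right, List.eraseIdx_cons_zero]

end RootsAndExchange

section ParabolicSubgroups

open CoxeterSystem

variable {B W : Type*} [Group W] {M : CoxeterMatrix B} (cs : CoxeterSystem M W)

theorem exists_reduced_word_mul_simple {T : Set B} {ω : List B} (hT : ∀ i ∈ ω, i ∈ T)
    (hω : cs.IsReduced ω) {s : B} (hs : s ∈ T) :
    ∃ ω' : List B, (∀ i ∈ ω', i ∈ T) ∧ cs.IsReduced ω' ∧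
      cs.wordProd ω' = cs.wordProd ω * cs.simple s := by
  by_cases hd : cs.IsRightDescent (cs.wordProd ω) s
  · obtain ⟨j, hj, hωj⟩ := exchange cs hd
    refine ⟨ω.eraseIdx j, fun i hi => hT i (List.mem_of_mem_eraseIdx hi), ?_, hωj.symm⟩
    have hlen := cs.isRightDescent_iff.mp hd
    rw [CoxeterSystem.IsReduced, ← hωj, List.length_eraseIdx_of_lt hj]
    rw [CoxeterSystem.IsReduced] at hω
    lia
  · refine ⟨ω.concat s, ?_, ?_, cs.wordProd_concat s ω⟩
    · simpa [or_imp, forall_and, hs] using hT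
    · rw [CoxeterSystem.IsReduced, wordProd_concat, cs.not_isRightDescent_iff.mp hd, hω,
        List.length_concat]

theorem exists_reduced_word_of_mem_parabolic {T : Set B} {g : W} (hg : g ∈ cs.parabolic T) :
    ∃ ω : List B, (∀ i ∈ ω, i ∈ T) ∧ cs.IsReduced ω ∧ cs.wordProd ω = g := by
  have hstep (s : B) (hs : s ∈ T) (x : W)
      (hx : ∃ ω : List B, (∀ i ∈ ω, i ∈ T) ∧ cs.IsReduced ω ∧ cs.wordProd ω = x) :
      ∃ ω : List B, (∀ i ∈ ω, i ∈ T) ∧ cs.IsReduced ω ∧ cs.wordProd ω = x * cs.simple s := by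
    obtain ⟨ω, hT, hω, rfl⟩ := hx
    exact exists_reduced_word_mul_simple cs hT hω hs
  induction hg using Subgroup.closure_induction_right with
  | one => exact ⟨[], by simp, by simp [CoxeterSystem.IsReduced], by simp⟩
  | mul_right x _ _ hy ih =>
    obtain ⟨s, hs, rfl⟩ := hy
    exact hstep s hs x ih
  | mul_inv_cancel x _ _ hy ih =>
    obtain ⟨s, hs, rfl⟩ := hy
    rw [cs.inv_simple]
    exact hstep s hs x ih

theorem exists_rightDescent_of_mem_parabolic {T : Set B} {g : W} (hg : g ∈ cs.parabolic T)
    (hg1 : g ≠ 1) : ∃ t ∈ T, cs.IsRightDescent g t := by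
  obtain ⟨ω, hT, hω, rfl⟩ := exists_reduced_word_of_mem_parabolic cs hg
  obtain rfl | ⟨ω, t, rfl⟩ := List.eq_nil_or_concat ω
  · simp at hg1
  · refine ⟨t, hT t (by simp), ?_⟩
    have hlen := cs.length_wordProd_le ω
    rw [IsRightDescent, hω, wordProd_concat, simple_mul_simple_cancel_right, List.length_concat]
    lia

theorem length_eq_of_reduced_word_of_descents {w : W} {ω : List B} (hω : cs.IsReduced ω)
    (hd : ∀ i ∈ ω, cs.IsRightDescent w i) :
    cs.length (w * (cs.wordProd ω)⁻¹) + ω.length = cs.length w := by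
  induction ω using List.reverseRecOn with
  | nil => simp
  | append_singleton ω s ih =>
    have hω' : cs.IsReduced ω := by simpa using hω.take ω.length
    obtain ⟨ζ, hζ, hζw⟩ := cs.exists_isReduced (w * (cs.wordProd ω)⁻¹)
    have hlen := ih hω' fun i hi => hd i (by simp [hi])
    rw [hζw, hζ] at hlen
    have hw : cs.wordProd (ζ ++ ω) = w := by rw [wordProd_append, ← hζw, inv_mul_cancel_right]
    have hws : cs.IsRightDescent w s := hd s (by simp)
    obtain ⟨j, hj, hexch⟩ := exchange cs (ω := ζ ++ ω) (hw ▸ hws)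
    rw [List.length_append] at hj
    have hlt : j < ζ.length := by
      -- Otherwise a letter of `ω` is deleted, so that `ω ++ [s]` is not reduced.
      by_contra! hle
      rw [List.eraseIdx_append_of_length_le hle, wordProd_append, wordProd_append, mul_assoc,
        mul_left_cancel_iff] at hexch
      have hshort := cs.length_wordProd_le (ω.eraseIdx (j - ζ.length))
      rw [List.length_eraseIdx_of_lt (by lia), ← hexch, ← wordProd_singleton, ← wordProd_append,
        hω, List.length_append] at hshort
      lia
    have hz : w * (cs.wordProd (ω ++ [s]))⁻¹ = cs.wordProd (ζ.eraseIdx j) := by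
      rw [List.eraseIdx_append_of_lt_length hlt, wordProd_append _ (ζ.eraseIdx j), hw] at hexch
      rw [wordProd_append, wordProd_singleton, mul_inv_rev, inv_simple, ← mul_assoc, hexch,
        mul_inv_cancel_right]
    have hle := cs.length_wordProd_le (ζ.eraseIdx j)
    rw [← hz, List.length_eraseIdx_of_lt hlt] at hle
    rw [List.length_append, List.length_singleton]
    have hmul := cs.length_mul_le (w * (cs.wordProd (ω ++ [s]))⁻¹) (cs.wordProd (ω ++ [s]))
    rw [inv_mul_cancel_right, hω, List.length_append, List.length_singleton] at hmul
    lia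

theorem length_mul_add_length_of_descents {w y : W} {D : Set B}
    (hD : ∀ i ∈ D, cs.IsRightDescent w i) (hy : y ∈ cs.parabolic D) :
    cs.length (w * y) + cs.length y = cs.length w := by
  obtain ⟨ω, hωD, hω, hωy⟩ := exists_reduced_word_of_mem_parabolic cs (inv_mem hy)
  have h := length_eq_of_reduced_word_of_descents cs hω fun i hi => hD i (hωD i hi)
  rwa [← hω, hωy, inv_inv, length_inv] at h

theorem finite_setOf_length_le [Finite B] (n : ℕ) : {w : W | cs.length w ≤ n}.Finite := by
  refine ((List.finite_length_le B n).image cs.wordProd).subset fun w hw => ?_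
  obtain ⟨ω, hω, rfl⟩ := cs.exists_isReduced w
  exact ⟨ω, hω.eq.symm.trans_le hw, rfl⟩

theorem finite_parabolic_of_descents [Finite B] {w : W} {D : Set B}
    (hD : ∀ i ∈ D, cs.IsRightDescent w i) : Finite (cs.parabolic D) :=
  (finite_setOf_length_le cs (cs.length w)).subset fun _ hy =>
    Nat.le_of_add_left_le (length_mul_add_length_of_descents cs hD hy).le

end ParabolicSubgroups

section ParabolicOrders

open Polynomial

theorem irreducible_cyclotomic_of_coprime {n N : ℕ} [NeZero n] [NeZero N] (h : n.Coprime N)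
    (L : Type*) [Field L] [CharZero L] [IsCyclotomicExtension {N} ℚ L] :
    Irreducible (cyclotomic n L) := by
  let E := CyclotomicField n L
  have : FiniteDimensional ℚ L := IsCyclotomicExtension.finiteDimensional {N} ℚ L
  have : FiniteDimensional L E := IsCyclotomicExtension.finiteDimensional {n} L E
  have : FiniteDimensional ℚ E := FiniteDimensional.trans ℚ L E
  have hη : IsPrimitiveRoot (IsCyclotomicExtension.zeta n L E) n :=
    IsCyclotomicExtension.zeta_spec n L E
  have hζ : IsPrimitiveRoot (algebraMap L E (IsCyclotomicExtension.zeta N ℚ L)) N :=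
    (IsCyclotomicExtension.zeta_spec N ℚ L).map_of_injective (algebraMap L E).injective
  set η := IsCyclotomicExtension.zeta n L E
  have hint : IsIntegral L η := .of_finite L η
  have hdeg : Module.finrank L E = (minpoly L η).natDegree :=
    (hη.powerBasis L).finrank.trans <| by
      rw [← PowerBasis.natDegree_minpoly, IsPrimitiveRoot.powerBasis_gen]
  have hle : N.totient * n.totient ≤ N.totient * (minpoly L η).natDegree := by
    have hlcm := hζ.lcm_totient_le_finrank (K := ℚ) hη
      (cyclotomic.irreducible_rat (Nat.lcm_pos (NeZero.pos N) (NeZero.pos n)))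
    rwa [h.symm.lcm_eq_mul, Nat.totient_mul h.symm, ← Module.finrank_mul_finrank ℚ L E, hdeg,
      IsCyclotomicExtension.finrank L (cyclotomic.irreducible_rat (NeZero.pos N))] at hlcm
  have hdvd : minpoly L η ∣ cyclotomic n L := by
    have hroot := hη.isRoot_cyclotomic (NeZero.pos n)
    rw [IsRoot, ← map_cyclotomic n (algebraMap L E), eval_map_algebraMap] at hroot
    exact minpoly.dvd L η hroot
  have heq : cyclotomic n L = minpoly L η :=
    eq_of_monic_of_dvd_of_natDegree_le (minpoly.monic hint) (cyclotomic.monic n L) hdvd <| by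
      rw [natDegree_cyclotomic]
      exact Nat.le_of_mul_le_mul_left hle (Nat.totient_pos.mpr (NeZero.pos N))
  exact heq ▸ minpoly.irreducible hint

theorem two_mul_cos_mem_adjoin_exp {N : ℕ} (q : ℕ) :
    ((2 * Real.cos (2 * Real.pi * q / N) : ℝ) : ℂ) ∈
      IntermediateField.adjoin ℚ {Complex.exp (2 * Real.pi * Complex.I / N)} := by
  set ζ := Complex.exp (2 * Real.pi * Complex.I / N) with hζ
  have hcos : ((2 * Real.cos (2 * Real.pi * q / N) : ℝ) : ℂ) = ζ ^ q + (ζ ^ q)⁻¹ := by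
    have hpow : ζ ^ q = Complex.exp ((2 * Real.pi * q / N : ℂ) * Complex.I) := by
      rw [hζ, ← Complex.exp_nat_mul]
      ring_nf
    push_cast
    rw [hpow, ← Complex.exp_neg, Complex.two_cos, neg_mul]
  have hmem := IntermediateField.mem_adjoin_simple_self ℚ ζ
  exact hcos ▸ add_mem (pow_mem hmem q) (inv_mem (pow_mem hmem q))

theorem exists_subfield_irreducible_cyclotomic {n N : ℕ} [NeZero n] [NeZero N]
    (h : n.Coprime N) :
    ∃ K : Subfield ℝ, (∀ q : ℕ, 2 * Real.cos (2 * Real.pi * q / N) ∈ K) ∧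
      Irreducible (cyclotomic n K) := by
  set ζ := Complex.exp (2 * Real.pi * Complex.I / N)
  have hζ : IsPrimitiveRoot ζ N := Complex.isPrimitiveRoot_exp N (NeZero.ne N)
  let L := IntermediateField.adjoin ℚ {ζ}
  have : IsCyclotomicExtension {N} ℚ L := by
    change IsCyclotomicExtension {N} ℚ L.toSubalgebra
    rw [IntermediateField.adjoin_simple_toSubalgebra_of_isAlgebraic
      ((hζ.isIntegral (NeZero.pos N)).tower_top (A := ℚ)).isAlgebraic]
    exact hζ.adjoin_isCyclotomicExtension ℚ
  let K : Subfield ℝ := L.toSubfield.comap Complex.ofRealHom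
  let ι : K →+* L :=
    (Complex.ofRealHom.comp K.subtype).codRestrict L.toSubfield fun x => x.2
  refine ⟨K, two_mul_cos_mem_adjoin_exp, ?_⟩
  apply (cyclotomic.monic n K).irreducible_of_irreducible_map ι
  rw [map_cyclotomic]
  exact irreducible_cyclotomic_of_coprime h L

theorem exists_coprime_common_multiple {ι : Type*} [Finite ι] {p : ℕ} (hp : p.Prime) (m : ι → ℕ)
    (hm : ∀ i, p ∣ m i → m i = 0) :
    ∃ N : ℕ, N ≠ 0 ∧ p.Coprime N ∧ ∀ i, m i ≠ 0 → m i ∣ N := by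
  have := Fintype.ofFinite ι
  refine ⟨∏ i with m i ≠ 0, m i, Finset.prod_ne_zero_iff.mpr fun i hi => (by simpa using hi),
    Nat.Coprime.prod_right fun i hi => ?_, fun i hi => Finset.dvd_prod_of_mem m (by simpa using hi)⟩
  exact hp.coprime_iff_not_dvd.mpr fun hdvd => (Finset.mem_filter.mp hi).2 (hm i hdvd)

/-- `K` is the real subfield of `ℚ(ζ_N)`, where `N` is twice a common multiple of the finite
entries of the Coxeter matrix. -/
theorem exists_subfield_two_mul_cos_mem {B : Type*} [Finite B] {M : CoxeterMatrix B} {p : ℕ}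
    (hp : p.Prime) (hp2 : p ≠ 2) (hfree : M.IsPFree p) :
    ∃ K : Subfield ℝ, (∀ i j, 2 * Real.cos (Real.pi / M i j) ∈ K) ∧
      Irreducible (cyclotomic p K) := by
  obtain ⟨N, hN, hpN, hdvd⟩ := exists_coprime_common_multiple hp (fun x : B × B => M x.1 x.2)
    fun x => hfree x.1 x.2
  have : NeZero p := ⟨hp.ne_zero⟩
  have : NeZero (2 * N) := ⟨by lia⟩
  have hcop : p.Coprime (2 * N) :=
    .mul_right ((Nat.coprime_primes hp Nat.prime_two).mpr hp2) hpN
  obtain ⟨K, hcos, hirr⟩ := exists_subfield_irreducible_cyclotomic hcop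
  refine ⟨K, fun i j => ?_, hirr⟩
  obtain h0 | h0 := eq_or_ne (M i j) 0
  · rw [h0, Nat.cast_zero, div_zero, Real.cos_zero, mul_one]
    exact ofNat_mem K 2
  obtain ⟨q, hq⟩ := hdvd (i, j) h0
  have hq0 : q ≠ 0 := by rintro rfl; exact hN hq
  have hangle : Real.pi / M i j = 2 * Real.pi * q / (2 * N : ℕ) := by
    have h0' : (M i j : ℝ) ≠ 0 := by exact_mod_cast h0
    have hq0' : (q : ℝ) ≠ 0 := by exact_mod_cast hq0
    rw [hq]
    push_cast
    field_simp
  exact hangle ▸ hcos q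

theorem eq_one_of_pow_eq_one_of_finrank_lt {K V : Type*} [Field K] [AddCommGroup V] [Module K V]
    [FiniteDimensional K V] {p : ℕ} (hp : p.Prime) (hirr : Irreducible (cyclotomic p K))
    {f : Module.End K V} (hf : f ^ p = 1) (hV : Module.finrank K V < p - 1) : f = 1 := by
  have := Fact.mk hp
  have hdvd : minpoly K f ∣ cyclotomic p K * (X - 1) := by
    rw [cyclotomic_prime_mul_X_sub_one]
    exact minpoly.dvd K f (by simp [hf])
  have hndvd : ¬ cyclotomic p K ∣ minpoly K f := fun h => by
    have hle := natDegree_le_of_dvd (h.trans f.minpoly_dvd_charpoly) f.charpoly_monic.ne_zero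
    rw [f.charpoly_natDegree, natDegree_cyclotomic, Nat.totient_prime hp] at hle
    exact hle.not_gt hV
  have hX : minpoly K f ∣ X - 1 :=
    ((hirr.coprime_iff_not_dvd.mpr hndvd).symm).dvd_of_dvd_mul_left hdvd
  have haeval := (minpoly.dvd_iff).mp hX
  simpa [sub_eq_zero] using haeval

variable {B W : Type*} [Group W] {M : CoxeterMatrix B} (cs : CoxeterSystem M W)

theorem geomRep_mem_span_simpleRoot {K : Subfield ℝ}
    (hK : ∀ i j, 2 * Real.cos (Real.pi / M i j) ∈ K) {T : Set B} {g : W} (hg : g ∈ cs.parabolic T) :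
    ∀ v ∈ Submodule.span K (simpleRoot '' T),
      geomRep cs g v ∈ Submodule.span K (simpleRoot '' T) := by
  obtain ⟨ω, hω, -, rfl⟩ := exists_reduced_word_of_mem_parabolic cs hg
  clear hg
  set U := Submodule.span K (simpleRoot '' T)
  have hroot (t : B) (ht : t ∈ T) : simpleRoot t ∈ U := Submodule.subset_span ⟨t, ht, rfl⟩
  have hcoroot (i : B) (v : B →₀ ℝ) (hv : v ∈ U) : simpleCoroot M i v ∈ K := by
    induction hv using Submodule.span_induction with
    | mem _ h =>
      obtain ⟨t, -, rfl⟩ := h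
      rw [simpleCoroot_simpleRoot]
      exact neg_mem (hK i t)
    | zero => simp
    | add v w _ _ hv hw => rw [map_add]; exact add_mem hv hw
    | smul c v _ hv =>
      rw [Subfield.smul_def, map_smul]
      exact mul_mem c.2 hv
  induction ω with
  | nil => simp
  | cons i ω ih =>
    intro v hv
    have hv' := ih (fun j hj => hω j (by simp [hj])) v hv
    rw [cs.wordProd_cons, geomRep_mul_apply, geomRep_simple_apply]
    exact sub_mem hv' (U.smul_mem (⟨_, hcoroot i _ hv'⟩ : K) (hroot i (hω i (by simp))))

theorem not_dvd_card_parabolic [Finite B] {p : ℕ} (hp : p.Prime) (hp2 : p ≠ 2)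
    (hfree : M.IsPFree p) {T : Set B} [Finite (cs.parabolic T)] (hT : T.ncard < p - 1) :
    ¬ p ∣ Nat.card (cs.parabolic T) := by
  intro hdvd
  have := Fact.mk hp
  obtain ⟨K, hK, hirr⟩ := exists_subfield_two_mul_cos_mem hp hp2 hfree
  obtain ⟨g, hg⟩ := exists_prime_orderOf_dvd_card' p hdvd
  have hgp : (g : W) ^ p = 1 := by
    rw [← hg, ← Subgroup.coe_pow, pow_orderOf_eq_one, Subgroup.coe_one]
  have hg1 : (g : W) ≠ 1 := fun h => by
    rw [OneMemClass.coe_eq_one.mp h, orderOf_one] at hg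
    exact hp.one_lt.ne hg
  obtain ⟨t, ht, htd⟩ := exists_rightDescent_of_mem_parabolic cs g.2 hg1
  let U := Submodule.span K (simpleRoot '' T)
  have : FiniteDimensional K U := .span_of_finite K (T.toFinite.image _)
  have := Fintype.ofFinite (simpleRoot '' T : Set (B →₀ ℝ))
  have hU : Module.finrank K U < p - 1 :=
    ((finrank_span_le_card _).trans_eq (Set.ncard_eq_toFinset_card' _).symm).trans_lt
      ((Set.ncard_image_le T.toFinite).trans_lt hT)
  let f : Module.End K U :=
    ((geomRep cs (g : W)).toLinearMap.restrictScalars K).restrict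
      (geomRep_mem_span_simpleRoot cs hK g.2)
  have hfpow (n : ℕ) (v : U) : ((f ^ n) v : B →₀ ℝ) = geomRep cs ((g : W) ^ n) v := by
    induction n with
    | zero => simp
    | succ n ih => rw [pow_succ', pow_succ', geomRep_mul_apply, ← ih]; rfl
  have hf : f ^ p = 1 := by
    ext1 v
    exact Subtype.ext (by simp [hfpow, hgp])
  have hf1 : f = 1 := eq_one_of_pow_eq_one_of_finrank_lt (V := U) hp hirr hf hU
  let a : U := ⟨simpleRoot t, Submodule.subset_span ⟨t, ht, rfl⟩⟩
  exact geomRep_simpleRoot_ne cs htd (congrArg Subtype.val (LinearMap.congr_fun hf1 a))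

end ParabolicOrders

section InvariantIdeals

variable {G R : Type*} [Group G] [Ring R] (ρ : G →* R) (H : Subgroup G)

/-- The sum `∑_{v ∈ H} ρ v` over a finite subgroup `H`; it is the (unnormalized) projector onto
`invariantIdeal ρ H`. -/
noncomputable def subgroupSum : R := ∑ᶠ v : H, ρ v

/-- The left ideal of elements of `R` invariant under right multiplication by `ρ v`, `v ∈ H`. -/
def invariantIdeal : Submodule R R where
  carrier := {x | ∀ v ∈ H, x * ρ v = x}
  add_mem' hx hy v hv := by rw [add_mul, hx v hv, hy v hv]
  zero_mem' _ _ := zero_mul _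
  smul_mem' r x hx v hv := by rw [smul_eq_mul, mul_assoc, hx v hv]

variable {ρ H}

theorem mem_invariantIdeal_closure {S : Set G} {x : R} :
    x ∈ invariantIdeal ρ (.closure S) ↔ ∀ v ∈ S, x * ρ v = x := by
  refine ⟨fun h v hv => h v (Subgroup.subset_closure hv), fun h v hv => ?_⟩
  induction hv using Subgroup.closure_induction with
  | mem v hv => exact h v hv
  | one => rw [map_one, mul_one]
  | mul u v _ _ hu hv => rw [map_mul, ← mul_assoc, hu, hv]
  | inv v _ hv =>
    nth_rw 1 [← hv]
    rw [mul_assoc, ← map_mul, mul_inv_cancel, map_one, mul_one]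

theorem invariantIdeal_anti : Antitone (invariantIdeal ρ) :=
  fun _ _ h _ hx v hv => hx v (h hv)

variable [Finite H]

theorem subgroupSum_mul {u : G} (hu : u ∈ H) : subgroupSum ρ H * ρ u = subgroupSum ρ H := by
  have := Fintype.ofFinite H
  simp only [subgroupSum, finsum_eq_sum_of_fintype, Finset.sum_mul]
  exact Fintype.sum_equiv (Equiv.mulRight (⟨u, hu⟩ : H)) _ _ fun v => (map_mul ρ (v : G) u).symm

theorem mul_subgroupSum {u : G} (hu : u ∈ H) : ρ u * subgroupSum ρ H = subgroupSum ρ H := by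
  have := Fintype.ofFinite H
  simp only [subgroupSum, finsum_eq_sum_of_fintype, Finset.mul_sum]
  exact Fintype.sum_equiv (Equiv.mulLeft (⟨u, hu⟩ : H)) _ _ fun v => (map_mul ρ u (v : G)).symm

theorem subgroupSum_mem_invariantIdeal : subgroupSum ρ H ∈ invariantIdeal ρ H :=
  fun _ => subgroupSum_mul

theorem mul_subgroupSum_eq_of_mem_invariantIdeal {x : R} (hx : x ∈ invariantIdeal ρ H) :
    x * subgroupSum ρ H = x * Nat.card H := by
  have := Fintype.ofFinite H
  simp only [subgroupSum, finsum_eq_sum_of_fintype, Finset.mul_sum]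
  rw [Finset.sum_congr rfl fun (v : H) _ => hx v v.2, Finset.sum_const, Finset.card_univ,
    Nat.card_eq_fintype_card, nsmul_eq_mul, Nat.cast_comm]

theorem subgroupSum_smul_eq {Y : Type*} [AddCommGroup Y] [Module R Y] {y : Y}
    (hy : ∀ v ∈ H, ρ v • y = y) : subgroupSum ρ H • y = (Nat.card H : R) • y := by
  have := Fintype.ofFinite H
  simp only [subgroupSum, finsum_eq_sum_of_fintype, Finset.sum_smul]
  rw [Finset.sum_congr rfl fun (v : H) _ => hy v v.2, Finset.sum_const, Finset.card_univ,
    Nat.card_eq_fintype_card, Nat.cast_smul_eq_nsmul]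

theorem exists_generator_invariantIdeal (hH : IsUnit (Nat.card H : R)) :
    ∃ e ∈ invariantIdeal ρ H, (∀ v ∈ H, ρ v * e = e) ∧ ∀ x ∈ invariantIdeal ρ H, x * e = x := by
  obtain ⟨c, hc⟩ := hH
  have hcomm (x : R) : Commute (↑c⁻¹ : R) x :=
    (show Commute (c : R) x from hc ▸ Nat.cast_commute _ x).units_inv_left
  refine ⟨↑c⁻¹ * subgroupSum ρ H, Submodule.smul_mem _ _ subgroupSum_mem_invariantIdeal,
    fun v hv => ?_, fun x hx => ?_⟩
  · rw [(hcomm (ρ v)).symm.left_comm, mul_subgroupSum hv]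
  · rw [← mul_assoc, ← (hcomm x).eq, mul_assoc, mul_subgroupSum_eq_of_mem_invariantIdeal hx, ← hc,
      (hcomm _).eq, mul_assoc, Units.mul_inv, mul_one]

theorem exists_retraction_invariantIdeal (hH : IsUnit (Nat.card H : R)) :
    ∃ π : R →ₗ[R] invariantIdeal ρ H, ∀ x : invariantIdeal ρ H, π x = x := by
  obtain ⟨e, he, -, hxe⟩ := exists_generator_invariantIdeal (ρ := ρ) hH
  exact ⟨LinearMap.toSpanSingleton R _ ⟨e, he⟩, fun x => Subtype.ext (hxe x x.2)⟩

theorem hom_invariantIdeal_eq_zero {Y : Type*} [AddCommGroup Y] [Module R Y] {H' : Subgroup G}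
    [Finite H'] (hle : H ≤ H') (hH : IsUnit (Nat.card H : R)) (hH' : IsUnit (Nat.card H' : R))
    (hY : ∀ y : Y, (∀ v ∈ H, ρ v • y = y) → ∀ v ∈ H', ρ v • y = y)
    (φ : invariantIdeal ρ H →ₗ[R] Y)
    (hφ : ∀ x : invariantIdeal ρ H, (x : R) ∈ invariantIdeal ρ H' → φ x = 0) : φ = 0 := by
  obtain ⟨e, he, hve, hxe⟩ := exists_generator_invariantIdeal (ρ := ρ) hH
  have hφe : φ ⟨e, he⟩ = 0 := by
    have hinv : ∀ v ∈ H', ρ v • φ ⟨e, he⟩ = φ ⟨e, he⟩ := hY _ fun v hv => by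
      rw [← map_smul]
      exact congrArg φ (Subtype.ext (hve v hv))
    have hsum := invariantIdeal_anti hle (subgroupSum_mem_invariantIdeal (ρ := ρ) (H := H'))
    rw [← hH'.smul_eq_zero, ← subgroupSum_smul_eq hinv, ← map_smul]
    exact (congrArg φ (Subtype.ext (hxe _ hsum))).trans
      (hφ ⟨_, hsum⟩ subgroupSum_mem_invariantIdeal)
  ext x
  rw [show x = (x : R) • ⟨e, he⟩ from Subtype.ext (hxe x x.2).symm, map_smul, hφe, smul_zero,
    LinearMap.zero_apply]

end InvariantIdeals

section AdaptedBasis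

open MonoidAlgebra

theorem span_image_inter {ι k V : Type*} [Ring k] [AddCommGroup V] [Module k V] {b : ι → V}
    (hb : LinearIndependent k b) (s t : Set ι) :
    Submodule.span k (b '' (s ∩ t)) = Submodule.span k (b '' s) ⊓ Submodule.span k (b '' t) := by
  simp only [Finsupp.span_image_eq_map_linearCombination, Finsupp.supported_inter]
  exact Submodule.map_inf _ hb

theorem linearIndependent_of_unitriangular {ι k : Type*} [Ring k] {b : ι → ι →₀ k} (ℓ : ι → ℕ)
    (h1 : ∀ i, b i i = 1) (h0 : ∀ i j, ℓ i ≤ ℓ j → j ≠ i → b i j = 0) :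
    LinearIndependent k b := by
  refine linearIndependent_iff.mpr fun c hc => ?_
  by_contra hne
  obtain ⟨i, hi, hmax⟩ := c.support.exists_max_image ℓ (Finsupp.support_nonempty_iff.mpr hne)
  have hci : Finsupp.linearCombination k b c i = c i := by
    rw [Finsupp.linearCombination_apply, Finsupp.sum_apply, Finsupp.sum,
      Finset.sum_eq_single_of_mem i hi, Finsupp.smul_apply, h1, smul_eq_mul, mul_one]
    intro j hj hji
    rw [Finsupp.smul_apply, h0 j i (hmax j hj) hji.symm, smul_zero]
  exact Finsupp.mem_support_iff.mp hi (by rw [← hci, hc, Finsupp.zero_apply])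

variable (k : Type*) {B W : Type*} [CommRing k] [Group W] {M : CoxeterMatrix B}
  (cs : CoxeterSystem M W)

theorem signHom_simple (i : B) : cs.signHom (cs.simple i) = -1 :=
  cs.lift_apply_simple _ i

/-- The embedding `w ↦ sgn(w) w` of `W` into its group algebra. -/
noncomputable def signedSingle : W →* k[W] where
  toFun w := single w ((cs.signHom w : ℤ) : k)
  map_one' := by simp [one_def]
  map_mul' u v := by simp [single_mul_single]

theorem signedSingle_apply (w : W) : signedSingle k cs w = single w ((cs.signHom w : ℤ) : k) := rfl

theorem signedSingle_simple (i : B) :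
    signedSingle k cs (cs.simple i) = single (cs.simple i) (-1) := by
  simp [signedSingle_apply, signHom_simple]

/-- The left ideal of the elements of `k[W]` on which right multiplication by `W_T` acts through the
sign character. -/
noncomputable def antiInvariants (T : Set B) : Submodule k[W] k[W] :=
  invariantIdeal (signedSingle k cs) (cs.parabolic T)

variable {k cs}

theorem mem_antiInvariants {T : Set B} {x : k[W]} :
    x ∈ antiInvariants k cs T ↔ ∀ i ∈ T, x * single (cs.simple i) (-1) = x := by
  rw [antiInvariants, CoxeterSystem.parabolic, mem_invariantIdeal_closure, Set.forall_mem_image]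
  simp only [signedSingle_simple]

theorem antiInvariants_anti : Antitone (antiInvariants k cs) :=
  fun _ _ h => invariantIdeal_anti (Subgroup.closure_mono (Set.image_mono h))

theorem coeff_subgroupSum_signedSingle {H : Subgroup W} [Finite H] [DecidablePred (· ∈ H)] (w : W) :
    (subgroupSum (signedSingle k cs) H).coeff w =
      if w ∈ H then ((cs.signHom w : ℤ) : k) else 0 := by
  classical
  have := Fintype.ofFinite H
  simp only [subgroupSum, finsum_eq_sum_of_fintype, coeff_sum, signedSingle_apply, coeff_single,
    Finsupp.finsetSum_apply, Finsupp.single_apply]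
  split_ifs with hw
  · rw [Finset.sum_eq_single_of_mem ⟨w, hw⟩ (Finset.mem_univ _), if_pos rfl]
    exact fun v _ hv => if_neg fun h => hv (Subtype.ext h)
  · exact Finset.sum_eq_zero fun (v : H) _ => if_neg fun h : (v : W) = w => hw (h ▸ v.2)

theorem coeff_mul_simple_of_mem_antiInvariants {T : Set B} {x : k[W]}
    (hx : x ∈ antiInvariants k cs T) {i : B} (hi : i ∈ T) (w : W) :
    x.coeff (w * cs.simple i) = -x.coeff w := by
  nth_rw 1 [← mem_antiInvariants.mp hx i hi]
  simp [coeff_mul_single_apply]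

theorem isRightDescent_of_mem_antiInvariants {T : Set B} {x : k[W]}
    (hx : x ∈ antiInvariants k cs T) {w : W} (hw : x.coeff w ≠ 0)
    (hmax : ∀ u, cs.length w < cs.length u → x.coeff u = 0) {i : B} (hi : i ∈ T) :
    cs.IsRightDescent w i := by
  by_contra hd
  have hlt := cs.not_isRightDescent_iff.mp hd
  refine hw (neg_eq_zero.mp ?_)
  rw [← coeff_mul_simple_of_mem_antiInvariants hx hi]
  exact hmax _ (by lia)

variable (k cs)

/-- The vector `w ∑_{v ∈ W_D} sgn(v) v` of `k[W]`, where `D` is the right descent set of `w`. -/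
noncomputable def adaptedVector (w : W) : k[W] :=
  single w 1 * subgroupSum (signedSingle k cs) (cs.parabolic {i | cs.IsRightDescent w i})

variable {k cs} [Finite B]

theorem coeff_adaptedVector_self (w : W) : (adaptedVector k cs w).coeff w = 1 := by
  classical
  have := finite_parabolic_of_descents cs (w := w) (D := {i | cs.IsRightDescent w i}) fun _ => id
  simp [adaptedVector, coeff_single_mul_apply, coeff_subgroupSum_signedSingle]

theorem coeff_adaptedVector_eq_zero {w u : W} (hle : cs.length w ≤ cs.length u) (hne : u ≠ w) :
    (adaptedVector k cs w).coeff u = 0 := by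
  classical
  have hD : ∀ i ∈ {i | cs.IsRightDescent w i}, cs.IsRightDescent w i := fun _ => id
  have := finite_parabolic_of_descents cs hD
  rw [adaptedVector, coeff_single_mul_apply, one_mul, coeff_subgroupSum_signedSingle, if_neg]
  intro hmem
  have hlen := length_mul_add_length_of_descents cs hD hmem
  rw [mul_inv_cancel_left] at hlen
  have hone := cs.length_eq_zero_iff.mp (by lia : cs.length (w⁻¹ * u) = 0)
  exact hne (inv_mul_eq_one.mp hone).symm

theorem linearIndependent_adaptedVector : LinearIndependent k (adaptedVector k cs) := by
  have h := linearIndependent_of_unitriangular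
    (b := fun w => (adaptedVector k cs w).coeff) cs.length
    coeff_adaptedVector_self fun _ _ => coeff_adaptedVector_eq_zero
  exact LinearIndependent.of_comp (coeffLinearEquiv k).toLinearMap h

theorem adaptedVector_mem_antiInvariants {T : Set B} {w : W} (hT : ∀ i ∈ T, cs.IsRightDescent w i) :
    adaptedVector k cs w ∈ antiInvariants k cs T := by
  have := finite_parabolic_of_descents cs (w := w) (D := {i | cs.IsRightDescent w i}) fun _ => id
  exact Submodule.smul_mem _ _ (antiInvariants_anti (k := k) (cs := cs) (a := T)
    (b := {i | cs.IsRightDescent w i}) hT subgroupSum_mem_invariantIdeal)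

theorem coeff_sum_smul_adaptedVector {F : Finset W} (c : W → k) {u : W}
    (hu : ∀ w ∈ F, cs.length w ≤ cs.length u) (hc : u ∉ F → c u = 0) :
    (∑ w ∈ F, c w • adaptedVector k cs w).coeff u = c u := by
  simp only [coeff_sum, Finsupp.finsetSum_apply, coeff_smul_apply, smul_eq_mul]
  rw [Finset.sum_eq_single u, coeff_adaptedVector_self, mul_one]
  · intro w hw hne
    rw [coeff_adaptedVector_eq_zero (hu w hw) hne.symm, mul_zero]
  · intro h
    rw [hc h, zero_mul]

theorem mem_span_adaptedVector {T : Set B} (n : ℕ) {x : k[W]} (hx : x ∈ antiInvariants k cs T)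
    (hn : ∀ u, n ≤ cs.length u → x.coeff u = 0) :
    x ∈ Submodule.span k (adaptedVector k cs '' {w | ∀ i ∈ T, cs.IsRightDescent w i}) := by
  classical
  induction n generalizing x with
  | zero =>
    rw [show x = 0 from coeff_injective (Finsupp.ext fun u => hn u (Nat.zero_le _))]
    exact zero_mem _
  | succ n ih =>
    set top := {w ∈ x.coeff.support | cs.length w = n}
    have hdesc (w : W) (hw : w ∈ top) (i : B) (hi : i ∈ T) : cs.IsRightDescent w i := by
      rw [Finset.mem_filter, Finsupp.mem_support_iff] at hw
      exact isRightDescent_of_mem_antiInvariants hx hw.1 (fun u hu => hn u (by lia)) hi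
    set y := ∑ w ∈ top, x.coeff w • adaptedVector k cs w
    have hyV : y ∈ antiInvariants k cs T := sum_mem fun w hw =>
      Submodule.smul_of_tower_mem _ _ (adaptedVector_mem_antiInvariants (hdesc w hw))
    have hyspan :
        y ∈ Submodule.span k (adaptedVector k cs '' {w | ∀ i ∈ T, cs.IsRightDescent w i}) :=
      sum_mem fun w hw => Submodule.smul_mem _ _ (Submodule.subset_span ⟨w, hdesc w hw, rfl⟩)
    rw [← sub_add_cancel x y]
    refine add_mem (ih (sub_mem hx hyV) fun u hu => ?_) hyspan
    rw [coeff_sub, Finsupp.sub_apply, sub_eq_zero]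
    refine (coeff_sum_smul_adaptedVector _ (fun w hw => ?_) fun hu' => ?_).symm
    · exact (Finset.mem_filter.mp hw).2.trans_le hu
    · by_contra hne
      have hlt : cs.length u ≠ n := fun h =>
        hu' (Finset.mem_filter.mpr ⟨Finsupp.mem_support_iff.mpr hne, h⟩)
      exact hne (hn u (by lia))

theorem restrictScalars_antiInvariants (T : Set B) :
    (antiInvariants k cs T).restrictScalars k =
      Submodule.span k (adaptedVector k cs '' {w | ∀ i ∈ T, cs.IsRightDescent w i}) := by
  refine le_antisymm (fun x hx => ?_) (Submodule.span_le.mpr ?_)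
  · refine mem_span_adaptedVector (x.coeff.support.sup cs.length + 1) hx fun u hu => ?_
    by_contra hne
    have := Finset.le_sup (f := cs.length) (Finsupp.mem_support_iff.mpr hne)
    lia
  · rintro _ ⟨w, hw, rfl⟩
    exact adaptedVector_mem_antiInvariants hw

theorem restrictScalars_iSup_antiInvariants (T J : Set B) :
    (⨆ j ∈ J, antiInvariants k cs (insert j T)).restrictScalars k =
      Submodule.span k (adaptedVector k cs ''
        {w | ∃ j ∈ J, ∀ i ∈ insert j T, cs.IsRightDescent w i}) := by
  simp only [Submodule.restrictScalars_iSup, restrictScalars_antiInvariants,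
    ← Submodule.span_iUnion, ← Set.image_iUnion]
  congr 2
  ext w
  simp only [Set.mem_iUnion, Set.mem_ofPred_eq, exists_prop]

theorem antiInvariants_inf_iSup_le (T J : Set B) (s : B) :
    antiInvariants k cs (insert s T) ⊓ ⨆ j ∈ J, antiInvariants k cs (insert j T) ≤
      ⨆ j ∈ J, antiInvariants k cs (insert j (insert s T)) := by
  rw [← Submodule.restrictScalars_le k, Submodule.restrictScalars_inf,
    restrictScalars_antiInvariants, restrictScalars_iSup_antiInvariants,
    restrictScalars_iSup_antiInvariants, ← span_image_inter linearIndependent_adaptedVector]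
  refine Submodule.span_mono (Set.image_mono ?_)
  rintro w ⟨hs, j, hjJ, hj⟩
  exact ⟨j, hjJ, Set.forall_mem_insert.mpr ⟨hj j (Set.mem_insert j T), hs⟩⟩

end AdaptedBasis

section DimensionShifting

open CategoryTheory Abelian

universe u

variable {R : Type u} [Ring R]

theorem subsingleton_ext_of_linearEquiv {N N' Y : Type u} [AddCommGroup N] [Module R N]
    [AddCommGroup N'] [Module R N'] [AddCommGroup Y] [Module R Y] (e : N ≃ₗ[R] N') {n : ℕ}
    (_ : Subsingleton (Ext (ModuleCat.of R N) (ModuleCat.of R Y) n)) :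
    Subsingleton (Ext (ModuleCat.of R N') (ModuleCat.of R Y) n) := by
  refine subsingleton_of_forall_eq 0 fun x => ?_
  have hinv : (Ext.mk₀ e.toModuleIso.inv).comp ((Ext.mk₀ e.toModuleIso.hom).comp x (zero_add n))
      (zero_add n) = x := by
    rw [← Ext.comp_assoc _ _ _ (zero_add 0) _ (by simp), Ext.mk₀_comp_mk₀, Iso.inv_hom_id,
      Ext.mk₀_id_comp]
  rw [← hinv, Subsingleton.elim ((Ext.mk₀ e.toModuleIso.hom).comp x (zero_add n)) 0, Ext.comp_zero]

theorem subsingleton_ext_zero {N Y : Type u} [AddCommGroup N] [Module R N] [AddCommGroup Y]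
    [Module R Y] (h : ∀ φ : N →ₗ[R] Y, φ = 0) :
    Subsingleton (Ext (ModuleCat.of R N) (ModuleCat.of R Y) 0) := by
  refine Ext.homEquiv₀.subsingleton_congr.mpr (subsingleton_of_forall_eq 0 fun f => ?_)
  exact ModuleCat.hom_ext (h f.hom)

theorem subsingleton_ext_of_projective {N Y : Type u} [AddCommGroup N] [Module R N]
    [AddCommGroup Y] [Module R Y] [Module.Projective R N] {n : ℕ} :
    Subsingleton (Ext (ModuleCat.of R N) (ModuleCat.of R Y) (n + 1)) := by
  have := (IsProjective.iff_projective N).mp (inferInstance : Module.Projective R N)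
  exact Ext.subsingleton_of_projective _ _ n

theorem subsingleton_ext_of_exact {N₁ N₂ N₃ Y : Type u} [AddCommGroup N₁] [Module R N₁]
    [AddCommGroup N₂] [Module R N₂] [AddCommGroup N₃] [Module R N₃] [AddCommGroup Y] [Module R Y]
    {f : N₁ →ₗ[R] N₂} {g : N₂ →ₗ[R] N₃} (hfg : Function.Exact f g) (hf : Function.Injective f)
    (hg : Function.Surjective g) {n : ℕ}
    [Subsingleton (Ext (ModuleCat.of R N₁) (ModuleCat.of R Y) n)]
    [Subsingleton (Ext (ModuleCat.of R N₂) (ModuleCat.of R Y) (n + 1))] :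
    Subsingleton (Ext (ModuleCat.of R N₃) (ModuleCat.of R Y) (n + 1)) := by
  have hS := ModuleCat.shortComplex_shortExact
    (ModuleCat.shortComplexOfCompEqZero f g hfg.linearMap_comp_eq_zero) hfg hf hg
  refine subsingleton_of_forall_eq 0 fun x => ?_
  obtain ⟨y, rfl⟩ := Ext.contravariant_sequence_exact₃ hS _ x (Subsingleton.elim _ _) (add_comm 1 n)
  rw [Subsingleton.elim y 0, Ext.comp_zero]

variable {X Y : Type u} [AddCommGroup X] [Module R X] [AddCommGroup Y] [Module R Y]

theorem injective_mapQ_inclusion {P A N N' : Submodule R X} (hA : A ≤ P) (hN : N' ≤ N)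
    (hinf : A ⊓ N ≤ N') :
    Function.Injective (Submodule.mapQ (N'.submoduleOf A) (N.submoduleOf P)
      (Submodule.inclusion hA) fun _ hx => hN hx) := by
  refine (injective_iff_map_eq_zero _).mpr fun a ha => ?_
  obtain ⟨a, rfl⟩ := Submodule.Quotient.mk_surjective _ a
  exact (Submodule.Quotient.mk_eq_zero _).mpr
    (hinf ⟨a.2, (Submodule.Quotient.mk_eq_zero (N.submoduleOf P)).mp ha⟩)

theorem exact_mapQ_inclusion_factor {P A N N' : Submodule R X} (hA : A ≤ P) (hN : N' ≤ N) :
    Function.Exact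
      (Submodule.mapQ (N'.submoduleOf A) (N.submoduleOf P) (Submodule.inclusion hA)
        fun _ hx => hN hx)
      (Submodule.factor fun _ hx => Submodule.mem_sup_right hx :
        P ⧸ N.submoduleOf P →ₗ[R] P ⧸ (A ⊔ N).submoduleOf P) := by
  refine fun x => ⟨fun hx => ?_, ?_⟩
  · obtain ⟨x, rfl⟩ := Submodule.Quotient.mk_surjective _ x
    obtain ⟨a, ha, b, hb, hab⟩ := Submodule.mem_sup.mp
      ((Submodule.Quotient.mk_eq_zero ((A ⊔ N).submoduleOf P)).mp hx)
    refine ⟨Submodule.Quotient.mk ⟨a, ha⟩, (Submodule.Quotient.eq _).mpr ?_⟩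
    change a - (x : X) ∈ N
    rw [← show a + b = (x : X) from hab, sub_add_cancel_left]
    exact neg_mem hb
  · rintro ⟨a, rfl⟩
    obtain ⟨a, rfl⟩ := Submodule.Quotient.mk_surjective _ a
    exact (Submodule.Quotient.mk_eq_zero _).mpr (Submodule.mem_sup_left a.2)

theorem subsingleton_ext_quotient_sup {P A N N' U : Submodule R X} (hU : U = A ⊔ N) (hA : A ≤ P)
    (hN : N' ≤ N) (hinf : A ⊓ N ≤ N') {n : ℕ}
    [Subsingleton (Ext (ModuleCat.of R (A ⧸ N'.submoduleOf A)) (ModuleCat.of R Y) n)]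
    [Subsingleton (Ext (ModuleCat.of R (P ⧸ N.submoduleOf P)) (ModuleCat.of R Y) (n + 1))] :
    Subsingleton (Ext (ModuleCat.of R (P ⧸ U.submoduleOf P)) (ModuleCat.of R Y) (n + 1)) := by
  subst hU
  exact subsingleton_ext_of_exact (exact_mapQ_inclusion_factor hA hN)
    (injective_mapQ_inclusion hA hN hinf) (Submodule.factor_surjective _)

theorem projective_quotient_submoduleOf {P N : Submodule R X} [Module.Projective R P] (h : N ≤ P)
    (hN : ∃ π : X →ₗ[R] N, ∀ x : N, π x = x) : Module.Projective R (P ⧸ N.submoduleOf P) := by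
  obtain ⟨π, hπ⟩ := hN
  let σ : P →ₗ[R] P := LinearMap.id - Submodule.inclusion h ∘ₗ π ∘ₗ P.subtype
  have hσ : N.submoduleOf P ≤ LinearMap.ker σ := fun x hx => by
    have hx' : π x = ⟨x, hx⟩ := hπ ⟨x, hx⟩
    ext1
    simp [σ, hx']
  refine .of_split ((N.submoduleOf P).liftQ σ hσ) (N.submoduleOf P).mkQ
    (Submodule.linearMap_qext _ (LinearMap.ext fun x => ?_))
  refine (Submodule.Quotient.eq _).mpr ?_
  rw [show ((N.submoduleOf P).liftQ σ hσ) ((N.submoduleOf P).mkQ x) = σ x from rfl]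
  simp [σ, Submodule.submoduleOf]

variable {B : Type*} (V : Set B → Submodule R X)

/-- The quotient of `V T` by the sum of the smaller submodules `V (T ∪ {j})`, `j ∈ J`. -/
abbrev Layer (T J : Set B) : Type u := V T ⧸ (⨆ j ∈ J, V (insert j T)).submoduleOf (V T)

variable {V}

theorem hom_layer_eq_zero {T J : Set B} {j : B} (hj : j ∈ J)
    (hhom : ∀ φ : V T →ₗ[R] Y, (∀ x : V T, (x : X) ∈ V (insert j T) → φ x = 0) → φ = 0)
    (φ : Layer V T J →ₗ[R] Y) : φ = 0 := by
  refine Submodule.linearMap_qext _ ((hhom _ fun x hx => ?_).trans (LinearMap.zero_comp _).symm)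
  have hx0 : Submodule.mkQ ((⨆ j ∈ J, V (insert j T)).submoduleOf (V T)) x = 0 :=
    (Submodule.Quotient.mk_eq_zero _).mpr
      (Submodule.mem_iSup_of_mem j (Submodule.mem_iSup_of_mem hj hx))
  rw [LinearMap.comp_apply, hx0, map_zero]

theorem projective_layer [Module.Projective R X] (hV : Antitone V) {T J : Set B}
    (hJ : J.Subsingleton)
    (hT : ∃ π : X →ₗ[R] V T, ∀ x : V T, π x = x)
    (hJT : ∀ j ∈ J, ∃ π : X →ₗ[R] V (insert j T), ∀ x : V (insert j T), π x = x) :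
    Module.Projective R (Layer V T J) := by
  obtain ⟨π, hπ⟩ := hT
  have : Module.Projective R (V T) := .of_split (V T).subtype π (LinearMap.ext hπ)
  refine projective_quotient_submoduleOf
    (iSup₂_le fun j _ => hV (Set.subset_insert j T)) ?_
  rcases hJ.eq_empty_or_singleton with rfl | ⟨j, rfl⟩
  · rw [iSup_emptyset]
    exact ⟨0, fun x => Subsingleton.elim _ _⟩
  · rw [iSup_singleton]
    exact hJT j rfl

variable [Finite B] [Module.Projective R X] {d : ℕ}

theorem subsingleton_ext_layer (hV : Antitone V)
    (hretr : ∀ T : Set B, T.ncard ≤ d → ∃ π : X →ₗ[R] V T, ∀ x : V T, π x = x)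
    (hdistr : ∀ (T J : Set B) (s : B),
      V (insert s T) ⊓ ⨆ j ∈ J, V (insert j T) ≤ ⨆ j ∈ J, V (insert j (insert s T)))
    (hhom : ∀ (T : Set B) (j : B), T.Nonempty → (insert j T).ncard ≤ d →
      ∀ φ : V T →ₗ[R] Y, (∀ x : V T, (x : X) ∈ V (insert j T) → φ x = 0) → φ = 0)
    (J T : Set B) (n : ℕ) (hn : n = 0 → T.Nonempty ∧ J.Nonempty) (hd : T.ncard + n < d) :
    Subsingleton (Ext (ModuleCat.of R (Layer V T J)) (ModuleCat.of R Y) n) := by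
  have hcard (j : B) (T : Set B) : (insert j T).ncard ≤ T.ncard + 1 := Set.ncard_insert_le j T
  induction J, J.toFinite using Set.Finite.induction_on generalizing T n with
  | empty =>
    obtain ⟨n, rfl⟩ := Nat.exists_eq_succ_of_ne_zero fun h => (hn h).2.ne_empty rfl
    have := projective_layer hV Set.subsingleton_empty (hretr T (by lia)) (by simp)
    exact subsingleton_ext_of_projective
  | @insert s J _ _ ih =>
    have hs := hcard s T
    obtain _ | n := n
    · exact subsingleton_ext_zero
        (hom_layer_eq_zero (Set.mem_insert s J) (hhom T s (hn rfl).1 (by lia)))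
    obtain rfl | hJ := J.eq_empty_or_nonempty
    · have := projective_layer (J := {s}) hV Set.subsingleton_singleton (hretr T (by lia))
        (by simpa using hretr (insert s T) (by lia))
      rw [insert_empty_eq]
      exact subsingleton_ext_of_projective
    have := ih (insert s T) n (fun _ => ⟨Set.insert_nonempty s T, hJ⟩) (by lia)
    have := ih T (n + 1) (by lia) hd
    have hle : ⨆ j ∈ J, V (insert j (insert s T)) ≤ ⨆ j ∈ J, V (insert j T) :=
      iSup₂_mono fun j _ => hV (Set.insert_subset_insert (Set.subset_insert s T))
    have hsup : ⨆ j ∈ insert s J, V (insert j T) = V (insert s T) ⊔ ⨆ j ∈ J, V (insert j T) :=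
      iSup_insert
    exact subsingleton_ext_quotient_sup hsup (hV (Set.subset_insert s T)) hle
      (hdistr T J s)

end DimensionShifting

section AntiInvariantLayers

open MonoidAlgebra

variable {k B W : Type*} [CommRing k] [Group W] {M : CoxeterMatrix B} {cs : CoxeterSystem M W}

theorem isUnit_natCast_monoidAlgebra {n : ℕ} (hn : IsUnit (n : k)) : IsUnit (n : k[W]) := by
  simpa using hn.map (algebraMap k k[W])

theorem signedSingle_smul_eq {Y : Type*} [AddCommGroup Y] [Module k[W] Y]
    (hY : ∀ a ∈ cs.signHom.ker, ∀ y : Y, single a (1 : k) • y = y) {i : B} {y : Y}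
    (hy : signedSingle k cs (cs.simple i) • y = y) (w : W) : signedSingle k cs w • y = y := by
  have hker {a : W} (ha : a ∈ cs.signHom.ker) : signedSingle k cs a • y = y := by
    simpa [signedSingle_apply, MonoidHom.mem_ker.mp ha] using hY a ha y
  obtain hw | hw := Int.units_eq_one_or (cs.signHom w)
  · exact hker hw
  · nth_rw 1 [← hy]
    rw [← mul_smul, ← map_mul]
    exact hker (by simp [MonoidHom.mem_ker, signHom_simple, hw])

theorem hom_antiInvariants_eq_zero {Y : Type*} [AddCommGroup Y] [Module k[W] Y]
    (hY : ∀ a ∈ cs.signHom.ker, ∀ y : Y, single a (1 : k) • y = y) {T : Set B} {j : B}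
    (hne : T.Nonempty) [Finite (cs.parabolic T)] [Finite (cs.parabolic (insert j T))]
    (hT : IsUnit (Nat.card (cs.parabolic T) : k))
    (hjT : IsUnit (Nat.card (cs.parabolic (insert j T)) : k))
    (φ : antiInvariants k cs T →ₗ[k[W]] Y)
    (hφ : ∀ x : antiInvariants k cs T, (x : k[W]) ∈ antiInvariants k cs (insert j T) → φ x = 0) :
    φ = 0 := by
  obtain ⟨i, hi⟩ := hne
  refine hom_invariantIdeal_eq_zero (H := cs.parabolic T) (H' := cs.parabolic (insert j T))
    (Subgroup.closure_mono (Set.image_mono (Set.subset_insert j T)))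
    (isUnit_natCast_monoidAlgebra hT) (isUnit_natCast_monoidAlgebra hjT) (fun y hy v _ => ?_) φ hφ
  exact signedSingle_smul_eq hY (hy _ (Subgroup.subset_closure (Set.mem_image_of_mem _ hi))) v

theorem antiInvariants_empty : antiInvariants k cs ∅ = ⊤ :=
  eq_top_iff.mpr fun _ _ => mem_antiInvariants.mpr (by simp)

theorem exists_sub_single_one_mem (x : k[W]) :
    ∃ c : k, x - single 1 c ∈ ⨆ j, antiInvariants k cs {j} := by
  have hsimple (i : B) : single (cs.simple i) 1 - 1 ∈ ⨆ j, antiInvariants k cs {j} := by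
    refine Submodule.mem_iSup_of_mem i (mem_antiInvariants.mpr ?_)
    rintro _ rfl
    simp [sub_mul, single_mul_single, one_def]
  have hgroup (w : W) : single w (1 : k) - 1 ∈ ⨆ j, antiInvariants k cs {j} := by
    induction w using cs.simple_induction_right with
    | one => simp [one_def]
    | mul_simple_right w i hw =>
      simpa [mul_sub, single_mul_single] using
        add_mem (Submodule.smul_mem _ (single w (1 : k)) (hsimple i)) hw
  induction x using MonoidAlgebra.induction_linear with
  | zero => exact ⟨0, by simp⟩
  | add x y hx hy =>
    obtain ⟨a, ha⟩ := hx
    obtain ⟨b, hb⟩ := hy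
    exact ⟨a + b, by simpa [single_add, add_sub_add_comm] using add_mem ha hb⟩
  | single w c =>
    exact ⟨c, by simpa [mul_sub, one_def, single_mul_single] using
      Submodule.smul_mem _ (single 1 c) (hgroup w)⟩

variable (k W) in
/-- The augmentation `k[W] → k`, with values in the trivial module. -/
noncomputable def augmentation : k[W] →ₗ[k[W]] (Rep.trivial k W k).ρ.asModule :=
  LinearMap.toSpanSingleton _ _ ((Rep.trivial k W k).ρ.asModuleEquiv.symm 1)

theorem augmentation_single (w : W) (c : k) :
    augmentation k W (single w c) = (Rep.trivial k W k).ρ.asModuleEquiv.symm c := by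
  rw [LinearEquiv.eq_symm_apply, augmentation, LinearMap.toSpanSingleton_apply,
    Representation.asModuleEquiv_map_smul, LinearEquiv.apply_symm_apply,
    Representation.asAlgebraHom_single, LinearMap.smul_apply, Representation.isTrivial_def]
  simp

theorem ker_augmentation (h2 : IsUnit (2 : k)) :
    LinearMap.ker (augmentation k W) = ⨆ j, antiInvariants k cs {j} := by
  have hle : ⨆ j, antiInvariants k cs {j} ≤ LinearMap.ker (augmentation k W) :=
    iSup_le fun j x hx => by
      have hneg := congrArg (augmentation k W) (mem_antiInvariants.mp hx j rfl)
      have hmul : augmentation k W (x * single (cs.simple j) (-1)) = -augmentation k W x := by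
        rw [← smul_eq_mul, map_smul, augmentation_single, map_neg, smul_neg]
        rfl
      rw [hmul, neg_eq_iff_add_eq_zero, ← two_smul k] at hneg
      exact LinearMap.mem_ker.mpr (h2.smul_eq_zero.mp hneg)
  refine le_antisymm (fun x hx => ?_) hle
  obtain ⟨c, hc⟩ := exists_sub_single_one_mem (cs := cs) x
  have hc0 : augmentation k W (single 1 c) = 0 := by
    simpa [LinearMap.mem_ker.mp hx] using LinearMap.mem_ker.mp (hle hc)
  rw [augmentation_single, LinearEquiv.map_eq_zero_iff] at hc0
  simpa [hc0] using hc

end AntiInvariantLayers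

section GroupCohomology

open CategoryTheory Abelian MonoidAlgebra

universe u

section

variable {k W : Type u} {B : Type*} [CommRing k] [Group W] {M : CoxeterMatrix B}

/-- The layer `Layer ∅ S` of the family of anti-invariant ideals is the trivial module. -/
noncomputable def layerEquivTrivial (cs : CoxeterSystem M W) (h2 : IsUnit (2 : k)) :
    Layer (antiInvariants k cs) ∅ Set.univ ≃ₗ[k[W]] (Rep.trivial k W k).ρ.asModule := by
  refine (Submodule.quotEquivOfEq _ (LinearMap.ker
    (augmentation k W ∘ₗ (antiInvariants k cs ∅).subtype)) ?_).trans
    (LinearMap.quotKerEquivOfSurjective _ fun y => ?_)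
  · rw [LinearMap.ker_comp, ker_augmentation (cs := cs) h2]
    simp [Submodule.submoduleOf]
  · exact ⟨⟨single 1 ((Rep.trivial k W k).ρ.asModuleEquiv y), by simp [antiInvariants_empty]⟩,
      (augmentation_single _ _).trans (LinearEquiv.symm_apply_apply _ _)⟩

end

section

variable {k G : Type u} [CommRing k] [Group G]

theorem exists_d_comp_eq_of_subsingleton_ext (P : ProjectiveResolution (Rep.trivial k G k))
    (A : Rep.{u} k G) (n : ℕ)
    [Subsingleton (Ext (ModuleCat.of k[G] (Rep.trivial k G k).ρ.asModule)
      (ModuleCat.of k[G] A.ρ.asModule) (n + 1))] {f : P.complex.X (n + 1) ⟶ A}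
    (hf : P.complex.d (n + 2) (n + 1) ≫ f = 0) :
    ∃ g : P.complex.X n ⟶ A, P.complex.d (n + 1) n ≫ g = f := by
  let E := Rep.toModuleMonoidAlgebra.{u} (k := k) (G := G)
  have : E.Additive := ⟨rfl⟩
  have : E.PreservesProjectiveObjects := ⟨fun {X} hX =>
    (Rep.equivalenceModuleMonoidAlgebra.{u} (k := k) (G := G)).map_projective_iff X |>.mpr hX⟩
  let Q := E.mapProjectiveResolution P
  have hf' : Q.complex.d (n + 2) (n + 1) ≫ E.map f = 0 := by
    change E.map _ ≫ E.map f = 0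
    rw [← E.map_comp, hf, E.map_zero]
  obtain ⟨g, hg⟩ := (Q.extMk_eq_zero_iff (E.map f) (n + 2) rfl hf' n rfl).mp
    (Subsingleton.elim (α := Ext (ModuleCat.of k[G] (Rep.trivial k G k).ρ.asModule)
      (ModuleCat.of k[G] A.ρ.asModule) (n + 1)) _ _)
  obtain ⟨g, rfl⟩ := E.map_surjective g
  exact ⟨g, E.map_injective ((E.map_comp _ _).trans hg)⟩

theorem subsingleton_groupCohomology_of_ext (A : Rep.{u} k G) (n : ℕ)
    [Subsingleton (Ext (ModuleCat.of k[G] (Rep.trivial k G k).ρ.asModule)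
      (ModuleCat.of k[G] A.ρ.asModule) (n + 1))] :
    Subsingleton (groupCohomology A (n + 1)) := by
  let P := Rep.barResolution k G
  have hexact : (P.complex.linearYonedaObj k A).ExactAt (n + 1) := by
    rw [HomologicalComplex.exactAt_iff' _ n (n + 1) (n + 2) (by simp) (by simp),
      ShortComplex.moduleCat_exact_iff]
    exact fun f hf => exists_d_comp_eq_of_subsingleton_ext P A n hf
  exact ModuleCat.subsingleton_of_isZero
    (hexact.isZero_homology.of_iso (groupCohomologyIso A (n + 1) P))

theorem coind_trivial_ρ_apply (N : Subgroup G) [N.Normal] {V : Type u} [AddCommGroup V]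
    [Module k V] {a : G} (ha : a ∈ N)
    (f : Rep.coind N.subtype (Rep.trivial k N V)) :
    (Rep.coind N.subtype (Rep.trivial k N V)).ρ a f = f := by
  refine Subtype.ext (funext fun g => ?_)
  change f.1 (g * a) = f.1 g
  have h := f.2 ⟨g * a * g⁻¹, Subgroup.Normal.conj_mem ‹_› a ha g⟩ g
  simpa using h

end

variable {k W : Type u} {B : Type*} [Finite B] [CommRing k] [Group W] {M : CoxeterMatrix B}

theorem subsingleton_groupCohomology_of_ker_signHom_trivial (cs : CoxeterSystem M W)
    {d : ℕ} (h2 : IsUnit (2 : k))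
    (hfin : ∀ T : Set B, T.ncard ≤ d → Finite (cs.parabolic T))
    (hunit : ∀ T : Set B, T.ncard ≤ d → IsUnit (Nat.card (cs.parabolic T) : k))
    (A : Rep.{u} k W) (hA : ∀ a ∈ cs.signHom.ker, ∀ y : A, A.ρ a y = y) {n : ℕ} (hn : 0 < n)
    (hnd : n < d) : Subsingleton (groupCohomology A n) := by
  obtain ⟨n, rfl⟩ := Nat.exists_eq_add_of_le' hn
  have hY : ∀ a ∈ cs.signHom.ker, ∀ y : A.ρ.asModule, single a (1 : k) • y = y := fun a ha y => by
    rw [Representation.single_smul, one_smul]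
    exact hA a ha y
  have hhom (T : Set B) (j : B) (hne : T.Nonempty) (hc : (insert j T).ncard ≤ d)
      (φ : antiInvariants k cs T →ₗ[k[W]] A.ρ.asModule)
      (hφ : ∀ x : antiInvariants k cs T, (x : k[W]) ∈ antiInvariants k cs (insert j T) → φ x = 0) :
      φ = 0 := by
    have hT := (Set.ncard_le_ncard (Set.subset_insert j T)).trans hc
    have := hfin T hT
    have := hfin _ hc
    exact hom_antiInvariants_eq_zero hY hne (hunit T hT) (hunit _ hc) φ hφ
  have hretr (T : Set B) (hT : T.ncard ≤ d) : ∃ π : k[W] →ₗ[k[W]] antiInvariants k cs T,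
      ∀ x : antiInvariants k cs T, π x = x := by
    have := hfin T hT
    exact exists_retraction_invariantIdeal (isUnit_natCast_monoidAlgebra (hunit T hT))
  have hlayer := subsingleton_ext_layer antiInvariants_anti hretr antiInvariants_inf_iSup_le hhom
    Set.univ ∅ (n + 1) (by lia) (by simpa using hnd)
  have := subsingleton_ext_of_linearEquiv (layerEquivTrivial cs h2) hlayer
  exact subsingleton_groupCohomology_of_ext A n

theorem subsingleton_groupCohomology_ker_signHom (cs : CoxeterSystem M W)
    {d : ℕ} (h2 : IsUnit (2 : k))
    (hfin : ∀ T : Set B, T.ncard ≤ d → Finite (cs.parabolic T))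
    (hunit : ∀ T : Set B, T.ncard ≤ d → IsUnit (Nat.card (cs.parabolic T) : k)) (V : Type u)
    [AddCommGroup V] [Module k V] {n : ℕ} (hn : 0 < n) (hnd : n < d) :
    Subsingleton (groupCohomology (Rep.trivial k cs.signHom.ker V) n) :=
  (groupCohomology.coindIso _ n).toLinearEquiv.symm.toEquiv.subsingleton_congr.mpr
    (subsingleton_groupCohomology_of_ker_signHom_trivial cs h2 hfin hunit _
      (fun _ ha => coind_trivial_ρ_apply _ ha) hn hnd)

end GroupCohomology

end CoxeterAlternating

theorem alternating_subgroup_cohomology_vanishes_infinite_general {B : Type*} [Finite B] {W : Type}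
    [Group W] {M : CoxeterMatrix B} (cs : CoxeterSystem M W) (p : ℕ) (hp : p.Prime)
    (hfree : M.IsPFree p) (d : ℕ) (hd : d ≤ p - 2)
    (hpar : ∀ T : Set B, T.ncard ≤ d → Finite (cs.parabolic T)) :
    ∀ k : ℕ, 0 < k → k < d →
      Subsingleton (groupCohomology (Rep.trivial (ZMod p) ↥cs.signHom.ker (ZMod p)) k) := by
  intro k hk hkd
  have : Fact p.Prime := ⟨hp⟩
  have hunit {m : ℕ} (hm : ¬ p ∣ m) : IsUnit (m : ZMod p) :=
    isUnit_iff_ne_zero.mpr fun h => hm ((ZMod.natCast_eq_zero_iff m p).mp h)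
  have h2 : ¬ p ∣ 2 := Nat.not_dvd_of_pos_of_lt two_pos (by lia)
  refine CoxeterAlternating.subsingleton_groupCohomology_ker_signHom cs (mod_cast hunit h2) hpar
    (fun T hT => hunit ?_) (ZMod p) hk hkd
  have := hpar T hT
  exact CoxeterAlternating.not_dvd_card_parabolic cs hp (by lia) hfree (by lia)

/-- Let `p` be an odd prime and `W` an infinite `p`-free Coxeter group of
rank `n = |S|` all of whose proper standard parabolic subgroups are finite.  Then
`H^k(A_W, 𝔽_p) = 0` for `0 < k < min (p-2) (n-1)`. -/
theorem alternating_subgroup_cohomology_vanishes_infinite {B W : Type} [Fintype B]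
    [Group W] [Infinite W] {M : CoxeterMatrix B} (cs : CoxeterSystem M W)
    (p : ℕ) (hp : p.Prime) (hodd : Odd p) (hfree : M.IsPFree p)
    (hpar : ∀ T : Set B, T ≠ Set.univ → Finite (cs.parabolic T)) :
    ∀ k : ℕ, 0 < k → k < min (p - 2) (Fintype.card B - 1) →
      Subsingleton (groupCohomology
        (Rep.trivial (ZMod p) ↥cs.signHom.ker (ZMod p)) k) := by
  intro k hk hkd
  refine alternating_subgroup_cohomology_vanishes_infinite_general cs p hp hfree _
    (min_le_left _ _) (fun T hT => hpar T ?_) k hk hkd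
  rintro rfl
  rw [Set.ncard_univ, Nat.card_eq_fintype_card] at hT
  lia
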